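/- Let A = {(0,0), (4,0), (0,4), (3,1), (1,3), (2,0), (0,2)} ⊆ ℕ². Then for every natural number s ≥ 2, the s-fold sumset of A equals sA = {y ∈ ℕ² : y₁ + y₂ is even and y₁ + y₂ ≤ 4s} \ {(1,1)}. -/

import Mathlib

open Pointwise

/-- The `s`-fold sumset of `A`: `0A = {0}` and `(s+1)A = A + sA`. -/
def sumset {M : Type*} [AddMonoid M] (A : Set M) : ℕ → Set M
  | 0 => {0}
  | s + 1 => A + sumset A s

/-!
The seven points of `A` are the even points of degree at most `4`, except `(1,1)` and `(2,2)`.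
If `y` has degree at least `6` and `y 1 ≤ y 0`, then subtracting one of `(4,0)`, `(3,1)` leaves
a remainder off the diagonal, on which both exceptions lie. Together with `(2,2) = (2,0) + (0,2)`
this fills in `(2,2)` from `2A` on, while `(1,1)` stays missing because it is not a sum of two
nonzero even points.
-/

/-- The set `A` of the theorem. -/
def generators : Set (Fin 2 → ℕ) :=
  {![0, 0], ![4, 0], ![0, 4], ![3, 1], ![1, 3], ![2, 0], ![0, 2]}

/-- The points of `ℕ²` of even degree at most `n`, where `y` has degree `y 0 + y 1`, without
`(1,1)`; for `n = 4 * s` this is the claimed value of `sA`. -/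
def puncturedEvenTriangle (n : ℕ) : Set (Fin 2 → ℕ) :=
  {y | Even (y 0 + y 1) ∧ y 0 + y 1 ≤ n} \ {![1, 1]}

theorem eq_vec_two_iff {α : Type*} {y : Fin 2 → α} {a b : α} :
    y = ![a, b] ↔ y 0 = a ∧ y 1 = b := by
  simp [funext_iff, Fin.forall_fin_two]

theorem mem_puncturedEvenTriangle {n : ℕ} {y : Fin 2 → ℕ} :
    y ∈ puncturedEvenTriangle n ↔
      Even (y 0 + y 1) ∧ y 0 + y 1 ≤ n ∧ ¬(y 0 = 1 ∧ y 1 = 1) := by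
  simp [puncturedEvenTriangle, eq_vec_two_iff, and_assoc]

theorem puncturedEvenTriangle_add_subset (m n : ℕ) :
    puncturedEvenTriangle m + puncturedEvenTriangle n ⊆ puncturedEvenTriangle (m + n) := by
  rintro _ ⟨x, hx, y, hy, rfl⟩
  simp only [mem_puncturedEvenTriangle, Pi.add_apply, Nat.even_iff] at hx hy ⊢
  omega

theorem zero_mem_generators : 0 ∈ generators :=
  Or.inl (by decide)

theorem generators_eq_puncturedEvenTriangle_sdiff :
    generators = puncturedEvenTriangle 4 \ {![2, 2]} := by
  ext y
  simp only [generators, Set.mem_insert_iff, Set.mem_singleton_iff, Set.mem_sdiff,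
    mem_puncturedEvenTriangle, eq_vec_two_iff, Nat.even_iff]
  omega

theorem generators_subset_puncturedEvenTriangle : generators ⊆ puncturedEvenTriangle 4 :=
  generators_eq_puncturedEvenTriangle_sdiff ▸ Set.sdiff_subset

theorem exists_generator_add_off_diagonal {y : Fin 2 → ℕ} (hy : 6 ≤ y 0 + y 1) :
    ∃ g ∈ generators, g 0 + g 1 = 4 ∧ ∃ x, g + x = y ∧ x 0 ≠ x 1 := by
  have subtract {c d : ℕ} (hg : ![c, d] ∈ generators) (hdeg : c + d = 4) (hc : c ≤ y 0)
      (hd : d ≤ y 1) (hne : y 0 - c ≠ y 1 - d) :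
      ∃ g ∈ generators, g 0 + g 1 = 4 ∧ ∃ x, g + x = y ∧ x 0 ≠ x 1 := by
    refine ⟨![c, d], hg, hdeg, y - ![c, d], add_tsub_cancel_of_le ?_, hne⟩
    exact Fin.forall_fin_two.2 ⟨hc, hd⟩
  rcases le_total (y 1) (y 0) with hle | hle
  · by_cases h : 4 ≤ y 0 ∧ y 0 - 4 ≠ y 1
    · exact subtract (c := 4) (d := 0) (by simp [generators]) rfl h.1 (Nat.zero_le _) h.2
    · exact subtract (c := 3) (d := 1) (by simp [generators]) rfl (by omega) (by omega) (by omega)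
  · by_cases h : 4 ≤ y 1 ∧ y 0 ≠ y 1 - 4
    · exact subtract (c := 0) (d := 4) (by simp [generators]) rfl (Nat.zero_le _) h.1 h.2
    · exact subtract (c := 1) (d := 3) (by simp [generators]) rfl (by omega) (by omega) (by omega)

theorem puncturedEvenTriangle_subset_generators_add {n : ℕ} (hn : 4 ≤ n) :
    puncturedEvenTriangle (n + 4) ⊆ generators + (puncturedEvenTriangle n \ {![2, 2]}) := by
  intro y hy
  rw [mem_puncturedEvenTriangle] at hy
  obtain ⟨heven, hdeg, hpuncture⟩ := hy
  by_cases hlow : y 0 + y 1 ≤ n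
  · by_cases htwo : y = ![2, 2]
    · refine ⟨![2, 0], by simp [generators], ![0, 2], ?_, by simp [htwo]⟩
      have htwo_le : 2 ≤ n := by omega
      simpa [mem_puncturedEvenTriangle, eq_vec_two_iff] using htwo_le
    · refine ⟨0, zero_mem_generators, y, ⟨?_, htwo⟩, zero_add y⟩
      exact mem_puncturedEvenTriangle.2 ⟨heven, hlow, hpuncture⟩
  · have hsix : 6 ≤ y 0 + y 1 := by
      rw [Nat.even_iff] at heven
      omega
    obtain ⟨g, hg, hgdeg, x, rfl, hx⟩ := exists_generator_add_off_diagonal hsix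
    simp only [Pi.add_apply, Nat.even_iff] at heven hdeg
    have hxeven : Even (x 0 + x 1) := Nat.even_iff.2 (by omega)
    have hxmem : x ∈ puncturedEvenTriangle n :=
      mem_puncturedEvenTriangle.2 ⟨hxeven, by omega, by omega⟩
    have hxtwo : x ≠ ![2, 2] := by
      rintro rfl
      exact hx rfl
    exact ⟨g, hg, x, ⟨hxmem, hxtwo⟩, rfl⟩

theorem generators_add_generators : generators + generators = puncturedEvenTriangle 8 := by
  apply Set.Subset.antisymm
  · exact (Set.add_subset_add generators_subset_puncturedEvenTriangle
      generators_subset_puncturedEvenTriangle).trans (puncturedEvenTriangle_add_subset 4 4)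
  · have h := puncturedEvenTriangle_subset_generators_add le_rfl
    rwa [← generators_eq_puncturedEvenTriangle_sdiff] at h

theorem generators_add_puncturedEvenTriangle {n : ℕ} (hn : 4 ≤ n) :
    generators + puncturedEvenTriangle n = puncturedEvenTriangle (n + 4) := by
  apply Set.Subset.antisymm
  · rw [add_comm n]
    exact (Set.add_subset_add_right generators_subset_puncturedEvenTriangle).trans
      (puncturedEvenTriangle_add_subset 4 n)
  · exact (puncturedEvenTriangle_subset_generators_add hn).trans
      (Set.add_subset_add_left Set.sdiff_subset)

theorem stmt_19 (s : ℕ) (hs : 2 ≤ s) :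
    sumset ({![0, 0], ![4, 0], ![0, 4], ![3, 1], ![1, 3], ![2, 0], ![0, 2]} :
        Set (Fin 2 → ℕ)) s
      = {y : Fin 2 → ℕ | Even (y 0 + y 1) ∧ y 0 + y 1 ≤ 4 * s} \ {![1, 1]} := by
  change sumset generators s = puncturedEvenTriangle (4 * s)
  induction s, hs using Nat.le_induction with
  | base => simpa [sumset] using generators_add_generators
  | succ s hs ih =>
    rw [sumset, ih]
    exact generators_add_puncturedEvenTriangle (by omega)
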